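/- arXiv:1507.00925 — 4 statements merged into one kernel-verified Lean document; each statement's English description precedes it below -/
import Mathlib

section
/- Let L be a function that is slowly varying at infinity (i.e., for every fixed t > 0, L(tx)/L(x) → 1 as x → ∞) and locally bounded on [x₀, ∞) for some x₀ ≥ 0. Then for every α > -1, as x → ∞, ∫_{x₀}^{x} t^α L(t) dt = (1 + o(1)) · (α+1)^{-1} · x^{α+1} L(x). -/
open Filter Asymptotics MeasureTheory

/-!
The substitution `t = s x` turns the integral over `(X, x]`, divided by `x ^ (α + 1) * L x`, into
the integral over `s ∈ (0, 1]` of `s ^ α * (L (s x) / L x)`, cut off at `s > X / x`. The integrand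
tends to `s ^ α` pointwise, and `∫₀¹ s ^ α = (α + 1)⁻¹`, so everything rests on a dominating
function.

It is provided by a Potter-type bound, `|L y| ≤ 3 (x / y) ^ δ |L x|` for `X ≤ y ≤ x`
(`SlowVar.potter`), with `δ = (α + 1) / 2`. For `x ≤ 2 y` this is a weak form of the uniform
convergence theorem (`SlowVar.local_bound`), where measurability of `L` enters through a
Steinhaus-type argument: the sets of `s ∈ [1, 4]` on which `L (s x) / L x` is far from `1` have
measure tending to `0`, so `L x` and `L y` can both be compared with `L` at a common point. The
general case follows by repeated halving of `x`.

The same bound with `y` fixed shows `x ^ (α + 1) * |L x| → ∞`, so the integral over the fixed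
interval `[x₀, X]` is negligible.
-/

namespace SlowVar

/-- The factors `s ∈ [1, 4]` for which `L (s x) / L x` is at distance more than `1/2` from `1`. -/
def bad (L : ℝ → ℝ) (x : ℝ) : Set ℝ :=
  {s | s ∈ Set.Icc (1 : ℝ) 4 ∧ 1 / 2 < |L (s * x) / L x - 1|}

lemma bad_tendsto {L : ℝ → ℝ} (hL : Measurable L)
    (hslow : ∀ t : ℝ, 0 < t → Tendsto (fun x : ℝ => L (t * x) / L x) atTop (nhds 1)) :
    Tendsto (fun x => volume (bad L x)) atTop (nhds 0) := by
  have h := tendsto_measure_of_tendsto_indicator (μ := (volume : Measure ℝ)) (A := ∅)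
    (As := bad L) (B := Set.Icc (1 : ℝ) 4) (atTop : Filter ℝ) ?_ measurableSet_Icc ?_ ?_ ?_
  · simpa using h
  · intro x
    have hm : Measurable fun s => |L (s * x) / L x - 1| :=
      (((hL.comp (measurable_id.mul_const x)).div_const _).sub_const _).abs
    exact measurableSet_Icc.inter (measurableSet_lt measurable_const hm)
  · simp
  · exact Eventually.of_forall fun x s hs => hs.1
  · intro s
    by_cases hs : s ∈ Set.Icc (1 : ℝ) 4
    · have h1 := hslow s (by linarith [hs.1])
      filter_upwards [(Metric.tendsto_nhds.1 h1) (1 / 2) (by norm_num)] with x hx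
      rw [Real.dist_eq] at hx
      simp only [Set.mem_empty_iff_false, iff_false]
      exact fun h => absurd h.2 (by linarith)
    · exact Eventually.of_forall fun x => iff_of_false (fun h => hs h.1) id

lemma eventually_ne {L : ℝ → ℝ}
    (hslow : ∀ t : ℝ, 0 < t → Tendsto (fun x : ℝ => L (t * x) / L x) atTop (nhds 1)) :
    ∀ᶠ x in atTop, L x ≠ 0 := by
  filter_upwards [(hslow 1 one_pos).eventually_ne one_ne_zero] with x hx h
  simp [h] at hx

/-- Comparison of `L` at two points within a factor `2` of each other: `L x` and `L y` are both
comparable to `L (s x)` for some `s ∈ [1, 2]`, because the exceptional sets of such `s` are too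
small to cover `[1, 2]`. -/
lemma local_bound {L : ℝ → ℝ} (hL : Measurable L)
    (hslow : ∀ t : ℝ, 0 < t → Tendsto (fun x : ℝ => L (t * x) / L x) atTop (nhds 1)) :
    ∃ X : ℝ, 0 < X ∧ (∀ x, X ≤ x → L x ≠ 0) ∧
      ∀ x y, X ≤ y → y ≤ x → x ≤ 2 * y → |L y| ≤ 3 * |L x| := by
  have h1 := (bad_tendsto hL hslow).eventually_lt_const
    (show (0 : ENNReal) < ENNReal.ofReal (1 / 4) by simp)
  obtain ⟨X, hX⟩ := eventually_atTop.1 (h1.and ((eventually_ne hslow).and (eventually_gt_atTop 0)))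
  refine ⟨X, (hX X le_rfl).2.2, fun x hx => (hX x hx).2.1, fun x y hXy hyx hx2 => ?_⟩
  obtain ⟨hby, hLy, hy0⟩ := hX y hXy
  obtain ⟨hbx, hLx, hx0⟩ := hX x (hXy.trans hyx)
  have hxy : 0 < x / y := div_pos hx0 hy0
  -- In terms of the factor `s` relative to `x`, the factor relative to `y` is `(x / y) * s`.
  have hpre : volume ((x / y * ·) ⁻¹' bad L y) ≤ volume (bad L y) := by
    rw [Real.volume_preimage_mul_left hxy.ne']
    refine mul_le_of_le_one_left' ?_
    rw [ENNReal.ofReal_le_one, abs_of_pos (inv_pos.2 hxy), inv_div, div_le_one hx0]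
    exact hyx
  have hex : ∃ s ∈ Set.Icc (1 : ℝ) 2, s ∉ bad L x ∪ (x / y * ·) ⁻¹' bad L y := by
    by_contra! hcon
    have h2 := (measure_mono (μ := volume) (show Set.Icc (1 : ℝ) 2 ⊆ _ from hcon)).trans
      (measure_union_le _ _)
    rw [Real.volume_Icc] at h2
    have h3 := h2.trans (add_le_add hbx.le (hpre.trans hby.le))
    rw [← ENNReal.ofReal_add (by norm_num) (by norm_num),
      ENNReal.ofReal_le_ofReal_iff (by norm_num)] at h3
    norm_num at h3
  obtain ⟨s, hs, hsn⟩ := hex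
  rw [Set.mem_union, not_or] at hsn
  have hx1 : |L (s * x) / L x - 1| ≤ 1 / 2 := by
    by_contra! h
    exact hsn.1 ⟨⟨hs.1, by linarith [hs.2]⟩, h⟩
  have hr1 : 1 ≤ x / y := (one_le_div hy0).2 hyx
  have hr2 : x / y ≤ 2 := (div_le_iff₀ hy0).2 hx2
  have hy1 : |L (s * x) / L y - 1| ≤ 1 / 2 := by
    by_contra! h
    refine hsn.2 ⟨⟨?_, ?_⟩, ?_⟩
    · nlinarith [hs.1]
    · nlinarith [hs.2, hs.1]
    · have : x / y * s * y = s * x := by field_simp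
      simpa only [this] using h
  have e1 : |L (s * x)| ≤ 3 / 2 * |L x| := by
    have : |L (s * x) / L x| ≤ 3 / 2 := by
      rw [abs_le] at hx1 ⊢; constructor <;> linarith
    rwa [abs_div, div_le_iff₀ (abs_pos.2 hLx)] at this
  have e2 : 1 / 2 * |L y| ≤ |L (s * x)| := by
    have : 1 / 2 ≤ |L (s * x) / L y| := by
      rw [abs_le] at hy1
      exact le_trans (by linarith) (le_abs_self _)
    rwa [abs_div, le_div_iff₀ (abs_pos.2 hLy)] at this
  linarith

/-- Potter-type bound: one step of halving `x` costs at most a factor `2 ^ δ`, by slow variation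
at the single ratio `1/2`. -/
lemma potter {L : ℝ → ℝ} (hL : Measurable L)
    (hslow : ∀ t : ℝ, 0 < t → Tendsto (fun x : ℝ => L (t * x) / L x) atTop (nhds 1))
    {δ : ℝ} (hδ : 0 < δ) :
    ∃ X₁ : ℝ, 0 < X₁ ∧ ∀ X, X₁ ≤ X → (∀ x, X ≤ x → L x ≠ 0) ∧
      ∀ x y, X ≤ y → y ≤ x → |L y| ≤ 3 * (x / y) ^ δ * |L x| := by
  obtain ⟨X0, hX0, hne, hloc⟩ := local_bound hL hslow
  have h2δ : (1 : ℝ) < 2 ^ δ := Real.one_lt_rpow (by norm_num) hδ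
  have hhalf : ∀ᶠ x in atTop, |L (1 / 2 * x) / L x| < 2 ^ δ :=
    ((hslow (1 / 2) (by norm_num)).abs).eventually_lt_const (by simpa using h2δ)
  obtain ⟨X2, hX2⟩ := eventually_atTop.1 hhalf
  refine ⟨max X0 X2, lt_of_lt_of_le hX0 (le_max_left _ _), fun X hX => ?_⟩
  have hXX0 : X0 ≤ X := (le_max_left _ _).trans hX
  have hXX2 : X2 ≤ X := (le_max_right _ _).trans hX
  refine ⟨fun x hx => hne x (hXX0.trans hx), ?_⟩
  have near : ∀ x y, X ≤ y → y ≤ x → x ≤ 2 * y → |L y| ≤ 3 * (x / y) ^ δ * |L x| := by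
    intro x y hy hyx hx2
    have hy0 : 0 < y := by linarith
    have h1 : 1 ≤ (x / y) ^ δ := Real.one_le_rpow ((one_le_div hy0).2 hyx) hδ.le
    have h2 := hloc x y (hXX0.trans hy) hyx hx2
    nlinarith [abs_nonneg (L x), mul_nonneg (abs_nonneg (L x)) (sub_nonneg.2 h1)]
  have key : ∀ n : ℕ, ∀ x y, X ≤ y → y ≤ x → x ≤ 2 ^ n * y →
      |L y| ≤ 3 * (x / y) ^ δ * |L x| := by
    intro n
    induction n with
    | zero =>
      intro x y hy hyx hx
      exact near x y hy hyx (by linarith)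
    | succ n ih =>
      intro x y hy hyx hx
      by_cases hc : x ≤ 2 * y
      · exact near x y hy hyx hc
      push Not at hc
      have hy0 : 0 < y := by linarith
      have h1 := ih (1 / 2 * x) y hy (by linarith) (by rw [pow_succ] at hx; linarith)
      have hLx := hne x (by linarith)
      have h2 := hX2 x (by linarith)
      rw [abs_div, div_lt_iff₀ (abs_pos.2 hLx)] at h2
      have h3 : (x / y) ^ δ = (1 / 2 * x / y) ^ δ * 2 ^ δ := by
        rw [← Real.mul_rpow (div_nonneg (by linarith) hy0.le) (by norm_num)]
        congr 1; ring
      rw [h3]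
      have h4 : 0 ≤ 3 * (1 / 2 * x / y) ^ δ := by
        have : 0 ≤ 1 / 2 * x / y := div_nonneg (by linarith) hy0.le
        positivity
      calc |L y| ≤ _ := h1
        _ ≤ 3 * (1 / 2 * x / y) ^ δ * (2 ^ δ * |L x|) := mul_le_mul_of_nonneg_left h2.le h4
        _ = _ := by ring
  intro x y hy hyx
  have hy0 : 0 < y := by linarith
  obtain ⟨n, hn⟩ := pow_unbounded_of_one_lt (x / y) (by norm_num : (1 : ℝ) < 2)
  exact key n x y hy hyx ((div_le_iff₀ hy0).1 hn.le)

lemma scale_identity {s x α : ℝ} (hs : 0 < s) (hx : 0 < x) :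
    x * (s * x) ^ α = s ^ α * x ^ (α + 1) := by
  rw [Real.mul_rpow hs.le hx.le, Real.rpow_add_one hx.ne']
  ring

/-- The part of Karamata's theorem coming from large arguments, by dominated convergence after
rescaling to `(0, 1]`. -/
lemma tail_tendsto {L : ℝ → ℝ} (hL : Measurable L)
    (hslow : ∀ t : ℝ, 0 < t → Tendsto (fun x : ℝ => L (t * x) / L x) atTop (nhds 1))
    {α X : ℝ} (hα : -1 < α) (hX : 0 < X) (hne : ∀ x, X ≤ x → L x ≠ 0)
    (hP : ∀ x y, X ≤ y → y ≤ x → |L y| ≤ 3 * (x / y) ^ ((α + 1) / 2) * |L x|) :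
    Tendsto (fun x => (∫ t in X..x, t ^ α * L t) / (x ^ (α + 1) * L x)) atTop
      (nhds (α + 1)⁻¹) := by
  set G : ℝ → ℝ := (Set.Ioi X).indicator (fun t => t ^ α * L t) with hG
  have hGm : Measurable G :=
    ((measurable_id.pow_const α).mul hL).indicator measurableSet_Ioi
  have hlim : (∫ s in (0 : ℝ)..1, s ^ α) = (α + 1)⁻¹ := by
    rw [integral_rpow (Or.inl hα), Real.one_rpow, Real.zero_rpow (by linarith)]
    simp
  have hF : ∀ s x, 0 < s → X < s * x → X ≤ x →
      x * G (s * x) / (x ^ (α + 1) * L x) = s ^ α * (L (s * x) / L x) := by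
    intro s x hs hsx hx
    have hx0 : 0 < x := hX.trans_le hx
    have hxp : x ^ (α + 1) ≠ 0 := (Real.rpow_pos_of_pos hx0 _).ne'
    have hLx := hne x hx
    rw [hG, Set.indicator_of_mem (show s * x ∈ Set.Ioi X from hsx), ← mul_assoc,
      scale_identity hs hx0]
    field_simp
  rw [← hlim]
  have hDC : Tendsto (fun x => ∫ s in (0 : ℝ)..1, x * G (s * x) / (x ^ (α + 1) * L x)) atTop
      (nhds (∫ s in (0 : ℝ)..1, s ^ α)) := by
    refine intervalIntegral.tendsto_integral_filter_of_dominated_convergence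
      (fun s => 3 * s ^ (α - (α + 1) / 2)) ?_ ?_ ?_ ?_
    · refine Eventually.of_forall fun x => Measurable.aestronglyMeasurable ?_
      exact ((hGm.comp (measurable_id.mul_const x)).const_mul x).div_const _
    · filter_upwards [eventually_ge_atTop X] with x hx
      refine ae_of_all _ fun s hs => ?_
      rw [Set.uIoc_of_le zero_le_one] at hs
      have hx0 : 0 < x := hX.trans_le hx
      by_cases hsx : X < s * x
      · rw [hF s x hs.1 hsx hx, Real.norm_eq_abs, abs_mul, abs_div,
          abs_of_pos (Real.rpow_pos_of_pos hs.1 _), sub_eq_add_neg, Real.rpow_add hs.1]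
        have h1 := hP x (s * x) hsx.le (by nlinarith [hs.2])
        have h2 : x / (s * x) = s⁻¹ := by
          have := hs.1.ne'
          field_simp
        rw [h2, Real.inv_rpow hs.1.le, ← Real.rpow_neg hs.1.le,
          ← div_le_iff₀ (abs_pos.2 (hne x hx))] at h1
        calc s ^ α * (|L (s * x)| / |L x|) ≤ s ^ α * (3 * s ^ (-((α + 1) / 2))) :=
              mul_le_mul_of_nonneg_left h1 (Real.rpow_nonneg hs.1.le _)
          _ = _ := by ring
      · rw [hG, Set.indicator_of_notMem (show s * x ∉ Set.Ioi X from hsx)]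
        simp only [mul_zero, zero_div, norm_zero]
        have := Real.rpow_nonneg hs.1.le (α - (α + 1) / 2)
        positivity
    · exact (intervalIntegral.intervalIntegrable_rpow' (by linarith)).const_mul 3
    · refine ae_of_all _ fun s hs => ?_
      rw [Set.uIoc_of_le zero_le_one] at hs
      have h1 : Tendsto (fun x => s ^ α * (L (s * x) / L x)) atTop (nhds (s ^ α)) := by
        simpa using (hslow s hs.1).const_mul (s ^ α)
      refine h1.congr' ?_
      filter_upwards [eventually_ge_atTop X, eventually_gt_atTop (X / s)] with x hx hx2
      rw [hF s x hs.1 _ hx]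
      rwa [div_lt_iff₀' hs.1] at hx2
  refine hDC.congr' ?_
  filter_upwards [eventually_ge_atTop X] with x hx
  rw [intervalIntegral.integral_div, intervalIntegral.integral_const_mul,
    intervalIntegral.mul_integral_comp_mul_right, zero_mul, one_mul,
    intervalIntegral.integral_of_le (hX.le.trans hx), intervalIntegral.integral_of_le hx, hG,
    setIntegral_indicator measurableSet_Ioi]
  congr 3
  ext t
  simp only [Set.mem_inter_iff, Set.mem_Ioc, Set.mem_Ioi]
  constructor
  · rintro ⟨⟨_, h⟩, h'⟩; exact ⟨h', h⟩
  · rintro ⟨h, h'⟩; exact ⟨⟨hX.trans h, h'⟩, h⟩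

lemma denom_tendsto {L : ℝ → ℝ} {α X : ℝ} (hα : -1 < α) (hX : 0 < X)
    (hne : ∀ x, X ≤ x → L x ≠ 0)
    (hP : ∀ x y, X ≤ y → y ≤ x → |L y| ≤ 3 * (x / y) ^ ((α + 1) / 2) * |L x|) :
    Tendsto (fun x => |x ^ (α + 1) * L x|) atTop atTop := by
  have hδ : 0 < (α + 1) / 2 := by linarith
  have hc : 0 < |L X| * X ^ ((α + 1) / 2) / 3 := by
    have := abs_pos.2 (hne X le_rfl)
    positivity
  refine tendsto_atTop_mono' _ ?_ ((tendsto_rpow_atTop hδ).const_mul_atTop hc)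
  filter_upwards [eventually_ge_atTop X] with x hx
  have hx0 : 0 < x := hX.trans_le hx
  have h1 := hP x X le_rfl hx
  rw [Real.div_rpow hx0.le hX.le] at h1
  have hXp : 0 < X ^ ((α + 1) / 2) := Real.rpow_pos_of_pos hX _
  have hxp : 0 < x ^ ((α + 1) / 2) := Real.rpow_pos_of_pos hx0 _
  have h2 : x ^ (α + 1) = x ^ ((α + 1) / 2) * x ^ ((α + 1) / 2) := by
    rw [← Real.rpow_add hx0]; congr 1; ring
  rw [abs_mul, h2, abs_of_pos (mul_pos hxp hxp)]
  have h3 : |L X| * X ^ ((α + 1) / 2) ≤ 3 * x ^ ((α + 1) / 2) * |L x| := by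
    calc |L X| * X ^ ((α + 1) / 2)
        ≤ (3 * (x ^ ((α + 1) / 2) / X ^ ((α + 1) / 2)) * |L x|) * X ^ ((α + 1) / 2) :=
          mul_le_mul_of_nonneg_right h1 hXp.le
      _ = _ := by field_simp
  nlinarith

end SlowVar

/-- Karamata's theorem, part 1: if `L` is slowly varying at infinity and locally bounded
on `[x₀, ∞)`, then for `α > -1`,
`∫_{x₀}^{x} t^α L(t) dt = (1 + o(1)) · (α+1)⁻¹ · x^{α+1} · L(x)` as `x → ∞`. -/
theorem karamata_part_one
    (L : ℝ → ℝ) (hLmeas : Measurable L)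
    (x₀ : ℝ) (hx₀ : 0 ≤ x₀)
    (hslow : ∀ t : ℝ, 0 < t →
      Tendsto (fun x : ℝ => L (t * x) / L x) atTop (nhds 1))
    (hlocbdd : ∀ b : ℝ, x₀ ≤ b → ∃ M : ℝ, ∀ x ∈ Set.Icc x₀ b, |L x| ≤ M)
    (α : ℝ) (hα : -1 < α) :
    (fun x : ℝ => (∫ t in x₀..x, t ^ α * L t) - (α + 1)⁻¹ * x ^ (α + 1) * L x)
      =o[atTop] (fun x : ℝ => x ^ (α + 1) * L x) := by
  obtain ⟨X₁, hX₁, hpot⟩ := SlowVar.potter hLmeas hslow (show 0 < (α + 1) / 2 by linarith)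
  obtain ⟨hne, hP⟩ := hpot (max X₁ x₀) (le_max_left _ _)
  have hX : 0 < max X₁ x₀ := hX₁.trans_le (le_max_left _ _)
  have hx₀X : x₀ ≤ max X₁ x₀ := le_max_right _ _
  generalize max X₁ x₀ = X at *
  have hint : ∀ b, x₀ ≤ b → IntervalIntegrable (fun t => t ^ α * L t) volume x₀ b := by
    intro b hb
    obtain ⟨M, hM⟩ := hlocbdd b hb
    have h1 : IntervalIntegrable (fun t : ℝ => t ^ α) volume x₀ b :=
      intervalIntegral.intervalIntegrable_rpow' hα
    rw [intervalIntegrable_iff_integrableOn_Ioc_of_le hb] at h1 ⊢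
    refine Integrable.mul_bdd (c := M) h1 hLmeas.aestronglyMeasurable ?_
    filter_upwards [ae_restrict_mem measurableSet_Ioc] with t ht
    exact hM t ⟨ht.1.le, ht.2⟩
  have hdne : ∀ᶠ x in atTop, x ^ (α + 1) * L x ≠ 0 := by
    filter_upwards [eventually_ge_atTop X] with x hx
    exact mul_ne_zero (Real.rpow_pos_of_pos (hX.trans_le hx) _).ne' (hne x hx)
  rw [isLittleO_iff_tendsto' (hdne.mono fun x hx h => absurd h hx)]
  have h1 := SlowVar.tail_tendsto hLmeas hslow hα hX hne hP
  have h2 : Tendsto (fun x => (∫ t in x₀..X, t ^ α * L t) / (x ^ (α + 1) * L x)) atTop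
      (nhds 0) := by
    rw [tendsto_zero_iff_abs_tendsto_zero]
    refine ((SlowVar.denom_tendsto hα hX hne hP).const_div_atTop
      |∫ t in x₀..X, t ^ α * L t|).congr fun x => ?_
    exact (abs_div _ _).symm
  have h3 := (h2.add h1).sub_const (α + 1)⁻¹
  rw [zero_add, sub_self] at h3
  refine h3.congr' ?_
  filter_upwards [hdne, eventually_ge_atTop X] with x hx hXx
  rw [← intervalIntegral.integral_add_adjacent_intervals (hint X hx₀X)
    ((hint X hx₀X).symm.trans (hint x (hx₀X.trans hXx))), sub_div, add_div, mul_assoc,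
    mul_div_cancel_right₀ _ hx]
end

section
/- Let L be a function that is slowly varying at infinity (i.e., for every fixed t > 0, L(tx)/L(x) → 1 as x → ∞) and locally bounded on [x₀, ∞) for some x₀ ≥ 0. Then for every α < -1, as x → ∞, ∫_{x}^{∞} t^α L(t) dt = -(1 + o(1)) · (α+1)^{-1} · x^{α+1} L(x). -/
/-!
After the substitution `t = x * u`, the integral divided by `x ^ (α + 1) * L x` becomes
`∫ u in Ioi 1, u ^ α * (L (u * x) / L x)`, whose integrand tends pointwise to `u ^ α`; the limit
is `-(α + 1)⁻¹` by dominated convergence. The dominating function comes from a Potter-type bound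
`|L (u * x)| ≤ C * u ^ δ * |L x|` for `u ≥ 1` and large `x` (`potter_bound`), with `δ > 0` so small
that `α + δ < -1`.

The Potter bound iterates `|L (e * x)| ≤ e ^ δ * |L x|`, starting from a bound of
`L (u * x) / L x` uniform in `u ∈ [1, e]`. That uniform bound is the only place where measurability
is essential. In the additive form `h (x) = log |L (exp x)|`, the set of `v ∈ [0, 2]` with
`|h (x + v) - h x| ≥ 1` has small measure once `x` is large. For `u ∈ [0, 1]` the good sets
attached to `x` and to `x + u` therefore contain a common point, through which `h (x + u)` and
`h x` are compared (`additive_bound`).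
-/

open Filter Asymptotics MeasureTheory

/-- If `L` is slowly varying then it has no zeros near infinity: the junk value `0 / 0 = 0` would
keep `L (1 * x) / L x` away from `1`. -/
lemma slow_eventually_ne_zero (L : ℝ → ℝ)
    (hslow : ∀ t : ℝ, 0 < t → Tendsto (fun x : ℝ => L (t * x) / L x) atTop (nhds 1)) :
    ∀ᶠ x in atTop, L x ≠ 0 := by
  filter_upwards [(hslow 1 one_pos).eventually_ne one_ne_zero] with x hx h0
  simp [h0] at hx

/-- A measurable function whose increments `h (x + v) - h x` tend to zero for each fixed `v ≥ 0`
has uniformly bounded increments over `[0, 1]` near infinity. -/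
lemma additive_bound (h : ℝ → ℝ) (hm : Measurable h)
    (hlim : ∀ v : ℝ, 0 ≤ v → Tendsto (fun x => h (x + v) - h x) atTop (nhds 0)) :
    ∃ X : ℝ, ∀ x, X ≤ x → ∀ u ∈ Set.Icc (0 : ℝ) 1, |h (x + u) - h x| ≤ 2 := by
  set μ : Measure ℝ := volume.restrict (Set.Icc (0 : ℝ) 2) with hμ
  -- Pointwise convergence on a set of finite measure gives convergence in measure.
  have hF : Tendsto (fun x : ℝ => μ {v | 1 ≤ |h (x + v) - h x|}) atTop (nhds 0) := by
    refine tendsto_of_seq_tendsto fun s hs => ?_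
    have key : TendstoInMeasure μ (fun n v => h (s n + v) - h (s n)) atTop (fun _ => (0 : ℝ)) := by
      refine tendstoInMeasure_of_tendsto_ae (fun n => ?_) ?_
      · exact ((hm.comp (measurable_const_add _)).sub_const _).aestronglyMeasurable
      · filter_upwards [ae_restrict_mem measurableSet_Icc] with v hv
        exact (hlim v hv.1).comp hs
    have := (tendstoInMeasure_iff_norm.1 key) 1 one_pos
    simpa [Function.comp_def] using this
  obtain ⟨X, hX⟩ := eventually_atTop.1
    (hF.eventually (gt_mem_nhds (show (0 : ENNReal) < ENNReal.ofReal (1 / 4) by simp)))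
  refine ⟨X, fun x hx u hu => ?_⟩
  have h1 := hX x hx
  have h2 := hX (x + u) (by linarith [hu.1])
  have hms : ∀ y, MeasurableSet {v | 1 ≤ |h (y + v) - h y|} := fun y =>
    measurableSet_le measurable_const
      (((hm.comp (measurable_const_add _)).sub_const _).abs)
  rw [hμ, Measure.restrict_apply (hms _)] at h1 h2
  -- The two bad sets, in the common coordinate `w`, cannot cover `[1, 2] ⊆ [u, 2]`.
  have hex : ∃ w ∈ Set.Icc (1 : ℝ) 2, |h (x + w) - h x| < 1 ∧
      |h (x + w) - h (x + u)| < 1 := by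
    by_contra! hcon
    set A := {v | 1 ≤ |h (x + v) - h x|} ∩ Set.Icc (0 : ℝ) 2
    set B := {v | 1 ≤ |h (x + u + v) - h (x + u)|} ∩ Set.Icc (0 : ℝ) 2
    have hsub : Set.Icc (1 : ℝ) 2 ⊆ A ∪ (fun w => -u + w) ⁻¹' B := by
      intro w hw
      by_cases hA : 1 ≤ |h (x + w) - h x|
      · exact Or.inl ⟨hA, by linarith [hw.1], hw.2⟩
      · refine Or.inr ⟨?_, ?_, ?_⟩
        · have := hcon w hw (not_le.1 hA)
          simpa [add_assoc] using this
        · change 0 ≤ -u + w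
          linarith [hw.1, hu.2]
        · change -u + w ≤ 2
          linarith [hw.2, hu.1]
    have hle := (measure_mono (μ := volume) hsub).trans (measure_union_le _ _)
    rw [measure_preimage_add, Real.volume_Icc] at hle
    have := hle.trans_lt (ENNReal.add_lt_add h1 h2)
    rw [← ENNReal.ofReal_add (by norm_num) (by norm_num),
      ENNReal.ofReal_lt_ofReal_iff (by norm_num)] at this
    norm_num at this
  obtain ⟨w, -, hw1, hw2⟩ := hex
  rw [abs_lt] at hw1 hw2
  rw [abs_le]
  constructor <;> linarith [hw1.1, hw1.2, hw2.1, hw2.2]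

/-- Near infinity `|L (u * x) / L x|` is bounded by `e²`, uniformly in `u ∈ [1, e]`. -/
lemma local_bound (L : ℝ → ℝ) (hLmeas : Measurable L)
    (hslow : ∀ t : ℝ, 0 < t → Tendsto (fun x : ℝ => L (t * x) / L x) atTop (nhds 1)) :
    ∃ X : ℝ, 0 < X ∧ ∀ x, X ≤ x → ∀ u ∈ Set.Icc (1 : ℝ) (Real.exp 1),
      |L (u * x)| ≤ Real.exp 2 * |L x| := by
  obtain ⟨X₁, hX₁⟩ := eventually_atTop.1 (slow_eventually_ne_zero L hslow)
  obtain ⟨X₂, hX₂⟩ := additive_bound (fun x => Real.log |L (Real.exp x)|)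
    (Real.measurable_log.comp (hLmeas.comp Real.measurable_exp).abs) (by
      intro v hv
      have h1 := (((hslow (Real.exp v) (Real.exp_pos v)).comp Real.tendsto_exp_atTop).abs).log
        (by simp)
      simp only [abs_one, Real.log_one] at h1
      refine h1.congr' ?_
      filter_upwards [Real.tendsto_exp_atTop.eventually_ge_atTop X₁] with x hx
      have hx' : X₁ ≤ Real.exp (x + v) := hx.trans (Real.exp_le_exp.2 (by linarith))
      simp only [Function.comp]
      rw [abs_div, ← Real.exp_add, add_comm v x,
        Real.log_div (abs_ne_zero.2 (hX₁ _ hx')) (abs_ne_zero.2 (hX₁ _ hx))])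
  refine ⟨max (Real.exp X₂) X₁, lt_max_of_lt_left (Real.exp_pos _), fun x hx u hu => ?_⟩
  have hx2 := (le_max_left _ _).trans hx
  have hx1 := (le_max_right _ _).trans hx
  have hx0 : 0 < x := (Real.exp_pos _).trans_le hx2
  have hu0 : 0 < u := one_pos.trans_le hu.1
  have hux : X₁ ≤ u * x := hx1.trans (le_mul_of_one_le_left hx0.le hu.1)
  have hb := hX₂ (Real.log x) ((Real.le_log_iff_exp_le hx0).2 hx2) (Real.log u)
    ⟨Real.log_nonneg hu.1, (Real.log_le_iff_le_exp hu0).2 hu.2⟩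
  simp only [Real.exp_add, Real.exp_log hx0, Real.exp_log hu0, mul_comm x u] at hb
  have p1 := abs_pos.2 (hX₁ _ hux)
  have p2 := abs_pos.2 (hX₁ _ hx1)
  have hb' : Real.log |L (u * x)| ≤ 2 + Real.log |L x| := by linarith [(abs_le.1 hb).2]
  calc |L (u * x)| = Real.exp (Real.log |L (u * x)|) := (Real.exp_log p1).symm
    _ ≤ Real.exp (2 + Real.log |L x|) := Real.exp_le_exp.2 hb'
    _ = _ := by rw [Real.exp_add, Real.exp_log p2]

/-- Potter's upper bound: a slowly varying function grows slower than any positive power,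
uniformly near infinity. -/
lemma potter_bound (L : ℝ → ℝ) (hLmeas : Measurable L)
    (hslow : ∀ t : ℝ, 0 < t → Tendsto (fun x : ℝ => L (t * x) / L x) atTop (nhds 1))
    (δ : ℝ) (hδ : 0 < δ) :
    ∃ X : ℝ, ∀ x, X ≤ x → ∀ u : ℝ, 1 ≤ u →
      |L (u * x)| ≤ Real.exp 2 * u ^ δ * |L x| := by
  obtain ⟨X₁, hX₁0, hX₁⟩ := local_bound L hLmeas hslow
  have hlim := (hslow (Real.exp 1) (Real.exp_pos 1)).abs
  rw [abs_one] at hlim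
  obtain ⟨X₂, hX₂⟩ := eventually_atTop.1
    ((hlim.eventually (gt_mem_nhds (Real.one_lt_rpow (Real.one_lt_exp_iff.2 one_pos) hδ))).and
      (slow_eventually_ne_zero L hslow))
  refine ⟨max X₁ X₂, ?_⟩
  have main : ∀ n : ℕ, ∀ x, max X₁ X₂ ≤ x → ∀ u : ℝ, 1 ≤ u → u ≤ Real.exp 1 ^ n →
      |L (u * x)| ≤ Real.exp 2 * u ^ δ * |L x| := by
    have base : ∀ x, max X₁ X₂ ≤ x → ∀ u : ℝ, 1 ≤ u → u ≤ Real.exp 1 →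
        |L (u * x)| ≤ Real.exp 2 * u ^ δ * |L x| := by
      intro x hx u hu1 hu2
      refine (hX₁ x ((le_max_left _ _).trans hx) u ⟨hu1, hu2⟩).trans ?_
      gcongr
      exact le_mul_of_one_le_right (Real.exp_pos 2).le (Real.one_le_rpow hu1 hδ.le)
    intro n
    induction n with
    | zero =>
      intro x hx u hu1 hu2
      exact base x hx u hu1 (hu2.trans (by simp))
    | succ n ih =>
      intro x hx u hu1 hu2
      rcases le_total u (Real.exp 1) with hue | hue
      · exact base x hx u hu1 hue
      have he := Real.exp_pos 1
      have hx0 : 0 < x := hX₁0.trans_le ((le_max_left _ _).trans hx)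
      have hex : max X₁ X₂ ≤ Real.exp 1 * x :=
        hx.trans (le_mul_of_one_le_left hx0.le (Real.one_le_exp zero_le_one))
      have h1 := ih (Real.exp 1 * x) hex (u / Real.exp 1) ((one_le_div he).2 hue)
        ((div_le_iff₀ he).2 (by rwa [pow_succ] at hu2))
      obtain ⟨h2, h3⟩ := hX₂ x ((le_max_right _ _).trans hx)
      rw [abs_div, div_lt_iff₀ (abs_pos.2 h3)] at h2
      have hu0 : 0 ≤ u := zero_le_one.trans hu1
      have e1 : u / Real.exp 1 * (Real.exp 1 * x) = u * x := by field_simp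
      rw [e1, Real.div_rpow hu0 he.le] at h1
      refine h1.trans ?_
      have hed : 0 < Real.exp 1 ^ δ := Real.rpow_pos_of_pos he δ
      calc Real.exp 2 * (u ^ δ / Real.exp 1 ^ δ) * |L (Real.exp 1 * x)|
          ≤ Real.exp 2 * (u ^ δ / Real.exp 1 ^ δ) * (Real.exp 1 ^ δ * |L x|) := by
            gcongr
        _ = _ := by field_simp
  intro x hx u hu
  obtain ⟨n, hn⟩ := pow_unbounded_of_one_lt u (Real.one_lt_exp_iff.2 one_pos)
  exact main n x hx u hu hn.le

/-- Karamata's theorem, part 2: if `L` is slowly varying at infinity and locally bounded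
on `[x₀, ∞)`, then for `α < -1`,
`∫_{x}^{∞} t^α L(t) dt = -(1 + o(1)) · (α+1)⁻¹ · x^{α+1} · L(x)` as `x → ∞`. -/
theorem karamata_part_two
    (L : ℝ → ℝ) (hLmeas : Measurable L)
    (x₀ : ℝ) (hx₀ : 0 ≤ x₀)
    (hslow : ∀ t : ℝ, 0 < t →
      Tendsto (fun x : ℝ => L (t * x) / L x) atTop (nhds 1))
    (hlocbdd : ∀ b : ℝ, x₀ ≤ b → ∃ M : ℝ, ∀ x ∈ Set.Icc x₀ b, |L x| ≤ M)
    (α : ℝ) (hα : α < -1) :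
    (fun x : ℝ => (∫ t in Set.Ioi x, t ^ α * L t) + (α + 1)⁻¹ * x ^ (α + 1) * L x)
      =o[atTop] (fun x : ℝ => x ^ (α + 1) * L x) := by
  -- With this choice `α + δ = (α - 1) / 2 < -1`.
  set δ : ℝ := -(α + 1) / 2 with hδdef
  have hδ : 0 < δ := by rw [hδdef]; linarith
  obtain ⟨X, hX⟩ := potter_bound L hLmeas hslow δ hδ
  have hR : Tendsto (fun x : ℝ => ∫ u in Set.Ioi (1 : ℝ), u ^ α * (L (u * x) / L x)) atTop
      (nhds (∫ u in Set.Ioi (1 : ℝ), u ^ α)) := by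
    refine tendsto_integral_filter_of_dominated_convergence
      (fun u => Real.exp 2 * u ^ (α + δ)) ?_ ?_ ?_ ?_
    · refine Eventually.of_forall fun x => Measurable.aestronglyMeasurable ?_
      exact (measurable_id.pow_const α).mul
        ((hLmeas.comp (measurable_id.mul_const x)).div_const _)
    · filter_upwards [eventually_ge_atTop X, slow_eventually_ne_zero L hslow] with x hx hx0
      filter_upwards [ae_restrict_mem measurableSet_Ioi] with u hu
      have hu1 : 1 < u := hu
      have hu0 : 0 < u := one_pos.trans hu1
      have hp := Real.rpow_pos_of_pos hu0 α
      rw [norm_mul, Real.norm_of_nonneg hp.le, Real.norm_eq_abs, abs_div, Real.rpow_add hu0]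
      calc u ^ α * (|L (u * x)| / |L x|) ≤ u ^ α * (Real.exp 2 * u ^ δ) := by
            gcongr
            exact (div_le_iff₀ (abs_pos.2 hx0)).2 (hX x hx u hu1.le)
        _ = _ := by ring
    · exact (integrableOn_Ioi_rpow_of_lt (by rw [hδdef]; linarith) one_pos).const_mul _
    · filter_upwards [ae_restrict_mem measurableSet_Ioi] with u hu
      simpa using (hslow u (one_pos.trans hu)).const_mul (u ^ α)
  rw [integral_Ioi_rpow_of_lt hα one_pos, Real.one_rpow] at hR
  rw [isLittleO_iff_exists_eq_mul]
  refine ⟨fun x => (∫ u in Set.Ioi (1 : ℝ), u ^ α * (L (u * x) / L x)) + (α + 1)⁻¹, ?_, ?_⟩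
  · have := hR.add_const (α + 1)⁻¹
    rwa [neg_div, one_div, neg_add_cancel] at this
  · filter_upwards [eventually_gt_atTop 0, slow_eventually_ne_zero L hslow] with x hx hx0
    have hs := integral_comp_mul_left_Ioi (fun t => t ^ α * L t) 1 hx
    rw [mul_one, smul_eq_mul] at hs
    have hs2 : ∫ t in Set.Ioi x, t ^ α * L t
        = x * ∫ u in Set.Ioi (1 : ℝ), (x * u) ^ α * L (x * u) := by
      rw [hs]; field_simp
    have hs3 : ∫ u in Set.Ioi (1 : ℝ), (x * u) ^ α * L (x * u)
        = (x ^ α * L x) * ∫ u in Set.Ioi (1 : ℝ), u ^ α * (L (u * x) / L x) := by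
      rw [← integral_const_mul]
      refine setIntegral_congr_fun measurableSet_Ioi fun u hu => ?_
      have hu0 : (0 : ℝ) < u := one_pos.trans hu
      rw [Real.mul_rpow hx.le hu0.le, mul_comm x u]
      field_simp
    simp only [Pi.mul_apply]
    rw [hs2, hs3, Real.rpow_add_one hx.ne']
    ring
end

section
/- Fix ε > 0. Then for all sufficiently large n there exists x₀ > 0 such that (1+ε)·n·(1 − F(x₀)) ≤ x₀ ≤ (1+2ε)·n·(1 − F(x₀)); equivalently, 1/((1+2ε)·n) ≤ (1 − F(x₀))/x₀ ≤ 1/((1+ε)·n). -/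
open Filter MeasureTheory

/-!
Write `f x = L x * x ^ (-γ)` for the tail `1 - F`. Since `f` takes values in `[0, 1]` and `L` is
eventually nonzero, `f` is eventually positive. Fix `t > 1` so close to `1` that
`(1 + ε) * t < (1 + 2ε) * t ^ (-γ)`. By slow variation `f (t x) / f x → t ^ (-γ)`, so a single
step `x ↦ t x` changes `f x / x` by a factor larger than `(1 + ε) / (1 + 2ε)` once `x` is past
some `X`. Along the progression `X * t ^ k` the inequality `(1 + ε) n f ≤ x` fails at `k = 0` for
large `n` and holds for large `k` because `f ≤ 1`. At the first `k` where it holds, its failure one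
step before gives the other inequality.
-/

/-- For fixed ratio `t` close enough to `1`, the tail cannot drop by more than the permitted slack
when the argument is multiplied by `t`. -/
lemma eventually_tail_step {γ ε t : ℝ} {L : ℝ → ℝ} (ht : 1 < t)
    (htε : (1 + ε) * t < (1 + 2 * ε) * t ^ (-γ))
    (hslow : Tendsto (fun x : ℝ => L (t * x) / L x) atTop (nhds 1))
    (hnonneg : ∀ x : ℝ, 0 < x → 0 ≤ L x * x ^ (-γ)) :
    ∀ᶠ x : ℝ in atTop, 0 < L x * x ^ (-γ) ∧
      (1 + ε) * t * (L x * x ^ (-γ)) ≤ (1 + 2 * ε) * (L (t * x) * (t * x) ^ (-γ)) := by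
  have h1 : Tendsto (fun x : ℝ => (1 + 2 * ε) * t ^ (-γ) * (L (t * x) / L x)) atTop
      (nhds ((1 + 2 * ε) * t ^ (-γ))) := by
    simpa using hslow.const_mul ((1 + 2 * ε) * t ^ (-γ))
  filter_upwards [h1.eventually_const_lt htε, hslow.eventually_const_lt zero_lt_one,
    eventually_gt_atTop 0] with x hx hL hx0
  -- A zero of `L` would make the quotient `0`, by the convention for division by zero.
  have hLx : L x ≠ 0 := fun h => by simp [h] at hL
  have hp : 0 < L x * x ^ (-γ) :=
    lt_of_le_of_ne (hnonneg x hx0) (mul_ne_zero hLx (Real.rpow_pos_of_pos hx0 _).ne').symm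
  refine ⟨hp, ?_⟩
  calc (1 + ε) * t * (L x * x ^ (-γ))
      ≤ (1 + 2 * ε) * t ^ (-γ) * (L (t * x) / L x) * (L x * x ^ (-γ)) := by gcongr
    _ = (1 + 2 * ε) * (L (t * x) * (t * x) ^ (-γ)) := by
        rw [Real.mul_rpow (by linarith) hx0.le]
        field_simp

/-- For any fixed `ε > 0` and all sufficiently large `n` there exists `x₀ > 0` with
`(1+ε)·n·(1 − F(x₀)) ≤ x₀ ≤ (1+2ε)·n·(1 − F(x₀))`, where `1 − F(x) = L(x)·x^{−γ}`. -/
theorem exists_x0_balancing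
    (γ : ℝ) (hγ1 : 1 < γ) (hγ2 : γ < 2)
    (L : ℝ → ℝ)
    (hslow : ∀ t : ℝ, 0 < t →
      Tendsto (fun x : ℝ => L (t * x) / L x) atTop (nhds 1))
    (μ : Measure ℝ) [IsProbabilityMeasure μ]
    (hcdf : ∀ x : ℝ, 0 < x → (μ {y : ℝ | y ≤ x}).toReal = 1 - L x * x ^ (-γ))
    (hposint : μ {y : ℝ | ∃ k : ℕ, 0 < k ∧ y = (k : ℝ)} = 1)
    (ε : ℝ) (hε : 0 < ε) :
    ∀ᶠ n : ℕ in atTop, ∃ x₀ : ℝ, 0 < x₀ ∧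
      (1 + ε) * n * (L x₀ * x₀ ^ (-γ)) ≤ x₀ ∧
      x₀ ≤ (1 + 2 * ε) * n * (L x₀ * x₀ ^ (-γ)) := by
  have hnonneg : ∀ x : ℝ, 0 < x → 0 ≤ L x * x ^ (-γ) := fun x hx => by
    have h := measureReal_le_one (μ := μ) (s := {y : ℝ | y ≤ x})
    rw [measureReal_def, hcdf x hx] at h
    linarith
  have hle : ∀ x : ℝ, 0 < x → L x * x ^ (-γ) ≤ 1 := fun x hx => by
    have h : 0 ≤ (μ {y : ℝ | y ≤ x}).toReal := ENNReal.toReal_nonneg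
    rw [hcdf x hx] at h
    linarith
  obtain ⟨t, ht, htε⟩ : ∃ t : ℝ, 1 < t ∧ (1 + ε) * t < (1 + 2 * ε) * t ^ (-γ) := by
    have hl : ContinuousAt (fun t : ℝ => (1 + ε) * t) 1 := by fun_prop
    have hr : ContinuousAt (fun t : ℝ => (1 + 2 * ε) * t ^ (-γ)) 1 :=
      continuousAt_const.mul (Real.continuousAt_rpow_const 1 (-γ) (Or.inl one_ne_zero))
    have hev : ∀ᶠ t : ℝ in nhds 1, (1 + ε) * t < (1 + 2 * ε) * t ^ (-γ) :=
      hl.eventually_lt hr (by simp; linarith)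
    have h := (hev.filter_mono nhdsWithin_le_nhds).and
      (self_mem_nhdsWithin : Set.Ioi (1 : ℝ) ∈ nhdsWithin 1 (Set.Ioi 1))
    obtain ⟨t, h1, h2⟩ := h.exists
    exact ⟨t, h2, h1⟩
  have ht0 : 0 < t := by linarith
  obtain ⟨X, hX⟩ := eventually_atTop.1
    ((eventually_tail_step ht htε (hslow t ht0) hnonneg).and (eventually_gt_atTop 0))
  have hX0 : 0 < X := (hX X le_rfl).2
  have hfX := (hX X le_rfl).1.1
  have hlarge : Tendsto (fun n : ℕ => (1 + ε) * n * (L X * X ^ (-γ))) atTop atTop :=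
    (tendsto_natCast_atTop_atTop.const_mul_atTop (by linarith)).atTop_mul_const hfX
  filter_upwards [hlarge.eventually_gt_atTop X] with n hn
  have hex : ∃ k : ℕ, (1 + ε) * n * (L (X * t ^ k) * (X * t ^ k) ^ (-γ)) ≤ X * t ^ k := by
    have h : Tendsto (fun k : ℕ => X * t ^ k) atTop atTop :=
      (tendsto_pow_atTop_atTop_of_one_lt ht).const_mul_atTop hX0
    obtain ⟨k, hk⟩ := (h.eventually_ge_atTop ((1 + ε) * n)).exists
    have hk1 := hle (X * t ^ k) (by positivity)
    exact ⟨k, (mul_le_of_le_one_right (by positivity) hk1).trans hk⟩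
  classical
  -- `k` is the first index at which the lower inequality holds; it is not `0` by `hn`.
  obtain ⟨k, hk, hmin⟩ : ∃ k : ℕ,
      (1 + ε) * n * (L (X * t ^ k) * (X * t ^ k) ^ (-γ)) ≤ X * t ^ k ∧
      ∀ m < k, ¬ (1 + ε) * n * (L (X * t ^ m) * (X * t ^ m) ^ (-γ)) ≤ X * t ^ m :=
    ⟨Nat.find hex, Nat.find_spec hex, fun _ hm => Nat.find_min hex hm⟩
  refine ⟨X * t ^ k, by positivity, hk, ?_⟩
  cases k with
  | zero =>
    rw [pow_zero, mul_one] at hk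
    exact absurd hk (not_le.2 hn)
  | succ m =>
    have hm := not_le.1 (hmin m m.lt_succ_self)
    have hstep := (hX (X * t ^ m) (le_mul_of_one_le_right hX0.le (one_le_pow₀ ht.le))).1.2
    have hx : X * t ^ (m + 1) = t * (X * t ^ m) := by ring
    rw [hx]
    generalize X * t ^ m = x at hm hstep
    calc t * x ≤ t * ((1 + ε) * n * (L x * x ^ (-γ))) := by gcongr
      _ = n * ((1 + ε) * t * (L x * x ^ (-γ))) := by ring
      _ ≤ n * ((1 + 2 * ε) * (L (t * x) * (t * x) ^ (-γ))) := by gcongr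
      _ = (1 + 2 * ε) * n * (L (t * x) * (t * x) ^ (-γ)) := by ring
end

section
/- A sequence d₁, …, dₙ of nonnegative integers is the degree sequence of a loopless multigraph on n vertices (multiple edges allowed, no loops) if and only if d₁ + ⋯ + dₙ is even and max_i dᵢ ≤ Σ_{j ≠ i*} d_j, where i* is an index attaining the maximum (i.e., the maximum degree is at most the sum of all the other degrees). -/
/-!
Necessity: the map `(i, j) ↦ (j, i)` pairs equal off-diagonal weights, so the total degree is even,
and each edge at `i` contributes to the degree of some other vertex, so `d i` is at most the sum of
the other degrees.

Sufficiency: writing `S` for the degree sum, the inequality for `i` reads `2 * d i ≤ S`, and the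
multigraph is built by induction on `S / 2`. If `S > 0`, take `i` of maximum degree and any `j ≠ i`
of positive degree, place one edge `ij`, and lower both degrees by one. The inequalities survive:
for `k = i, j` both sides drop by `2`, while a violation at another `k` would give
`d i ≥ d k ≥ S / 2`, which together with `d j ≥ 1` exceeds the sum `S`.
-/

open Finset

/-- Evenness of the degree sum, by pairing `(i, j)` with `(j, i)` modulo `2`. -/
lemma even_sum_sum_of_symm {n : ℕ} (w : Fin n → Fin n → ℕ)
    (hs : ∀ i j, w i j = w j i) (h0 : ∀ i, w i i = 0) : Even (∑ i, ∑ j, w i j) := by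
  rw [← ZMod.natCast_eq_zero_iff_even, ← Fintype.sum_prod_type', Nat.cast_sum]
  refine Finset.sum_involution (fun p _ => p.swap) ?_ ?_ (fun _ _ => mem_univ _)
    (fun _ _ => Prod.swap_swap _)
  · rintro ⟨a, b⟩ -
    simp only [Prod.swap, hs b a]
    exact CharTwo.add_self_eq_zero _
  · rintro ⟨a, b⟩ - hne heq
    obtain rfl : b = a := congrArg Prod.fst heq
    exact hne (by simp [h0])

/-- Sufficiency, with the degree sum written as `2 * m` for the induction. -/
lemma exists_multigraph_of_sum_eq {n : ℕ} (m : ℕ) : ∀ d : Fin n → ℕ, ∑ i, d i = 2 * m →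
    (∀ i, d i ≤ m) → ∃ w : Fin n → Fin n → ℕ,
      (∀ i j, w i j = w j i) ∧ (∀ i, w i i = 0) ∧ (∀ i, ∑ j, w i j = d i) := by
  induction m with
  | zero =>
    intro d _ hle
    exact ⟨fun _ _ => 0, by simp, by simp, fun i => by simpa using (Nat.le_zero.mp (hle i)).symm⟩
  | succ m ih =>
    intro d hsum hle
    have hne : (univ : Finset (Fin n)).Nonempty := by
      by_contra h
      rw [not_nonempty_iff_eq_empty.mp h, sum_empty] at hsum
      omega
    obtain ⟨i, -, hi⟩ := exists_max_image univ d hne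
    have hsplit := add_sum_erase univ d (mem_univ i)
    obtain ⟨j, hj, hdj⟩ : ∃ j ∈ univ.erase i, d j ≠ 0 := by
      apply exists_ne_zero_of_sum_ne_zero
      have := hle i
      omega
    have hji : j ≠ i := ne_of_mem_erase hj
    have hdi : d i ≠ 0 := by have := hi j (mem_univ j); omega
    have hsplit' := add_sum_erase _ d hj
    let e : Fin n → ℕ := fun k => d k - ((if k = i then 1 else 0) + (if k = j then 1 else 0))
    have he : ∀ k, d k = e k + ((if k = i then 1 else 0) + (if k = j then 1 else 0)) := by
      intro k
      simp only [e]
      split_ifs with h1 h2 h2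
      · exact absurd (h2.symm.trans h1) hji
      · subst h1; omega
      · subst h2; omega
      · omega
    have hesum : ∑ k, e k = 2 * m := by
      have h : ∑ k, d k = ∑ k, e k + 2 := by
        rw [sum_congr rfl fun k _ => he k]
        simp [sum_add_distrib]
      omega
    have hele : ∀ k, e k ≤ m := by
      intro k
      have hk := he k
      have hkm := hle k
      by_cases h1 : k = i
      · simp only [h1, if_true] at hk hkm ⊢
        omega
      by_cases h2 : k = j
      · simp only [h2, if_true] at hk hkm ⊢
        omega
      -- The third vertex: `d i + d j + d k` is at most the whole sum.
      have hk' : d k ≤ ∑ x ∈ (univ.erase i).erase j, d x :=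
        single_le_sum_of_canonicallyOrdered (by simp [h1, h2])
      have := hi k (mem_univ k)
      omega
    obtain ⟨w, hs, h0, hw⟩ := ih e hesum hele
    refine ⟨fun a b => w a b + ((if a = i then if b = j then 1 else 0 else 0) +
      (if a = j then if b = i then 1 else 0 else 0)), ?_, ?_, ?_⟩
    · intro a b
      simp only [hs a b]
      split_ifs <;> rfl
    · intro a
      simp only [h0 a]
      split_ifs <;> simp_all
    · intro a
      rw [he a, ← hw a, sum_add_distrib, sum_add_distrib]
      congr 2 <;> split_ifs <;> simp

/-- A sequence `d₁, …, dₙ` of nonnegative integers is the degree sequence of a loopless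
multigraph (multiple edges allowed, no loops) on `n` vertices if and only if the total
sum `d₁ + ⋯ + dₙ` is even and every degree (in particular the maximum one) is at most
the sum of all the other degrees. -/
theorem multigraph_degree_sequence_iff
    (n : ℕ) (d : Fin n → ℕ) :
    (∃ w : Fin n → Fin n → ℕ,
        (∀ i j, w i j = w j i) ∧ (∀ i, w i i = 0) ∧ (∀ i, ∑ j : Fin n, w i j = d i))
      ↔ (Even (∑ i : Fin n, d i) ∧
          ∀ i : Fin n, d i ≤ ∑ j ∈ Finset.univ.erase i, d j) := by
  constructor
  · rintro ⟨w, hs, h0, hw⟩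
    refine ⟨?_, fun i => ?_⟩
    · simp only [← hw]
      exact even_sum_sum_of_symm w hs h0
    · rw [← hw i, ← add_sum_erase univ (w i) (mem_univ i), h0 i, zero_add]
      refine sum_le_sum fun j _ => ?_
      rw [hs i j, ← hw j]
      exact single_le_sum_of_canonicallyOrdered (mem_univ i)
  · rintro ⟨⟨m, hm⟩, hle⟩
    refine exists_multigraph_of_sum_eq m d (by omega) fun i => ?_
    have := hle i
    have := add_sum_erase univ d (mem_univ i)
    omega
end
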